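/- For every n ≥ 2 and m ≥ 1, the m+1-st Taylor coefficient of V_n at 0 beyond degree 1 is A_{m+1}^{(n)} = -(1/(n+1))·Σ_{k=1}^{n} cos^{2m}(kπ/(n+1))·sin²(kπ/(n+1)); in particular A_m^{(n)} < 0 for all m ≥ 2 with the sum nonzero, and specifically A_m^{(n)} < 0 for all m > n. -/

import Mathlib

noncomputable def V (x : ℝ) : ℕ → ℝ
  | 0 => 1
  | n + 1 => (1 - x + V x n) / (1 + V x n)

theorem V_pos (x : ℝ) (hx : x < 1) (n : ℕ) : 0 < V x n := by
  induction n with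
  | zero => simp [V]
  | succ n ih =>
    rw [V]
    have : 0 < 1 - x := by linarith
    positivity

theorem V_formula (s : ℝ) (hs : 0 < s) (n : ℕ) :
    (V (1 - s ^ 2) n - s) * (1 + s) ^ (n + 1) = (V (1 - s ^ 2) n + s) * (1 - s) ^ (n + 1) := by
  induction n with
  | zero => simp [V]; ring
  | succ n ih =>
    have hp := V_pos (1 - s ^ 2) (by nlinarith) n
    rw [V]
    set v := V (1 - s ^ 2) n with hv
    have h1 : (1 - (1 - s ^ 2) + v) / (1 + v) - s = (1 - s) * (v - s) / (1 + v) := by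
      field_simp; ring
    have h2 : (1 - (1 - s ^ 2) + v) / (1 + v) + s = (1 + s) * (v + s) / (1 + v) := by
      field_simp; ring
    rw [h1, h2, pow_succ (1 + s), pow_succ (1 - s)]
    linear_combination (1 - s) * (1 + s) / (1 + v) * ih

theorem sum_inv (N : ℕ) (hN : 0 < N) (w : ℂ) (hw : IsPrimitiveRoot w N) (t : ℂ)
    (ht : t ^ N ≠ 1) :
    ∑ k ∈ Finset.range N, (1 - t * w ^ k)⁻¹ = N / (1 - t ^ N) := by
  have h0 : 1 - t ^ N ≠ 0 := fun h => ht (by linear_combination -h)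
  have h1 : ∀ k, (1 - t * w ^ k)⁻¹ = (∑ j ∈ Finset.range N, (t * w ^ k) ^ j) / (1 - t ^ N) := by
    intro k
    have hg := mul_neg_geom_sum (t * w ^ k) N
    have hpow : (t * w ^ k) ^ N = t ^ N := by
      rw [mul_pow, ← pow_mul, mul_comm k, pow_mul, hw.pow_eq_one]; simp
    rw [hpow] at hg
    have hne : 1 - t * w ^ k ≠ 0 := by
      intro h
      rw [h, zero_mul] at hg
      exact h0 hg.symm
    rw [← hg] at h0 ⊢
    have h3 := right_ne_zero_of_mul h0
    field_simp
  simp_rw [h1]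
  rw [← Finset.sum_div, Finset.sum_comm]
  congr 1
  rw [Finset.sum_eq_single 0]
  · simp
  · intro j hj hj0
    have hj' := Finset.mem_range.1 hj
    have hne : w ^ j ≠ 1 := hw.pow_ne_one_of_pos_of_lt hj0 hj'
    have hg := mul_neg_geom_sum (w ^ j) N
    rw [← pow_mul, mul_comm j, pow_mul, hw.pow_eq_one, one_pow, sub_self] at hg
    have hz := (mul_eq_zero.1 hg).resolve_left (fun h => hne (by linear_combination -h))
    have : ∀ k ∈ Finset.range N, (t * w ^ k) ^ j = t ^ j * (w ^ j) ^ k := by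
      intro k _
      rw [mul_pow, ← pow_mul, ← pow_mul, mul_comm k]
    rw [Finset.sum_congr rfl this, ← Finset.mul_sum, hz, mul_zero]
  · intro h; exact absurd (Finset.mem_range.2 hN) h

theorem D_pos (t c : ℝ) (ht : |t| < 1) (hc : |c| ≤ 1) : 0 < 1 - 2 * t * c + t ^ 2 := by
  have h1 : t * c ≤ |t| := by
    calc t * c ≤ |t * c| := le_abs_self _
      _ = |t| * |c| := abs_mul _ _
      _ ≤ |t| * 1 := by gcongr
      _ = |t| := mul_one _
  have h2 : t ^ 2 = |t| ^ 2 := (sq_abs t).symm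
  nlinarith [sq_nonneg (1 - |t|), mul_pos (sub_pos.2 ht) (sub_pos.2 ht)]

theorem poisson (N : ℕ) (hN : 0 < N) (t : ℝ) (ht : |t| < 1) :
    ∑ k ∈ Finset.range N, (1 - t ^ 2) / (1 - 2 * t * Real.cos (2 * (k * Real.pi / N)) + t ^ 2)
      = N * (1 + t ^ N) / (1 - t ^ N) := by
  have htN : |t ^ N| < 1 := by
    rw [abs_pow]; exact pow_lt_one₀ (abs_nonneg _) ht hN.ne'
  have htN1 : 1 - t ^ N ≠ 0 := by
    have := (abs_lt.1 htN).2
    linarith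
  have hw := Complex.isPrimitiveRoot_exp N hN.ne'
  have hs := sum_inv N hN _ hw (t : ℂ) (by
    intro h
    apply htN1
    have : t ^ N = 1 := by exact_mod_cast h
    linarith)
  have hre := congrArg Complex.re hs
  rw [Complex.re_sum] at hre
  have hr : ((N : ℂ) / (1 - (t : ℂ) ^ N)).re = N / (1 - t ^ N) := by
    have : (N : ℂ) / (1 - (t : ℂ) ^ N) = ((N / (1 - t ^ N) : ℝ) : ℂ) := by push_cast; rfl
    rw [this, Complex.ofReal_re]
  rw [hr] at hre
  have key : ∀ k ∈ Finset.range N,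
      (1 - t ^ 2) / (1 - 2 * t * Real.cos (2 * (k * Real.pi / N)) + t ^ 2)
      = 2 * ((1 - (t : ℂ) * Complex.exp (2 * Real.pi * Complex.I / N) ^ k)⁻¹).re - 1 := by
    intro k _
    have he : Complex.exp (2 * Real.pi * Complex.I / N) ^ k
        = Complex.exp (((2 * (k * Real.pi / N) : ℝ) : ℂ) * Complex.I) := by
      rw [← Complex.exp_nat_mul]; congr 1; push_cast; ring
    rw [he]
    set φ := 2 * (k * Real.pi / N)
    have hD := D_pos t (Real.cos φ) ht (Real.abs_cos_le_one φ)
    have hsq := Real.sin_sq_add_cos_sq φ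
    rw [Complex.inv_re]
    have hre : (1 - (t : ℂ) * Complex.exp ((φ : ℂ) * Complex.I)).re = 1 - t * Real.cos φ := by
      simp [Complex.exp_ofReal_mul_I_re]
    have him : (1 - (t : ℂ) * Complex.exp ((φ : ℂ) * Complex.I)).im = - (t * Real.sin φ) := by
      simp [Complex.exp_ofReal_mul_I_im]
    have hn : Complex.normSq (1 - (t : ℂ) * Complex.exp ((φ : ℂ) * Complex.I))
        = 1 - 2 * t * Real.cos φ + t ^ 2 := by
      rw [Complex.normSq_apply, hre, him]
      linear_combination t ^ 2 * hsq
    rw [hn, hre]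
    have hD' := hD.ne'
    rw [eq_sub_iff_add_eq, div_add_one hD', ← mul_div_assoc]
    congr 1
    ring
  rw [Finset.sum_congr rfl key, Finset.sum_sub_distrib, ← Finset.mul_sum, hre]
  simp
  field_simp
  ring

theorem V_partial (n : ℕ) (x : ℝ) (hx : x < 1) :
    V x n = 1 + ∑ k ∈ Finset.Icc 1 n, -(1 / ((n : ℝ) + 1)) *
      (x * Real.sin (k * Real.pi / (n + 1)) ^ 2 /
        (1 - x * Real.cos (k * Real.pi / (n + 1)) ^ 2)) := by
  obtain ⟨s, hs, rfl⟩ : ∃ s : ℝ, 0 < s ∧ 1 - s ^ 2 = x :=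
    ⟨√(1 - x), Real.sqrt_pos.2 (by linarith), by rw [Real.sq_sqrt (by linarith)]; ring⟩
  have hV := V_formula s hs n
  set t := (1 - s) / (1 + s) with htd
  have ht : |t| < 1 := by
    rw [htd, abs_div, abs_of_pos (by linarith : 0 < 1 + s), div_lt_one (by linarith), abs_lt]
    constructor <;> linarith
  have hP := poisson (n + 1) n.succ_pos t ht
  have htN : |t ^ (n + 1)| < 1 := by
    rw [abs_pow]; exact pow_lt_one₀ (abs_nonneg _) ht n.succ_ne_zero
  have htN1 : 1 - t ^ (n + 1) ≠ 0 := by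
    have := (abs_lt.1 htN).2
    linarith
  have hts : 1 + t ≠ 0 := by
    have := (abs_lt.1 ht).1
    linarith
  have hts' : 1 - t ≠ 0 := by
    have := (abs_lt.1 ht).2
    linarith
  have hst : s = (1 - t) / (1 + t) := by
    rw [eq_div_iff hts, htd]; field_simp; ring
  have h1s : (1 + s) ≠ 0 := by linarith
  have hV2 : V (1 - s ^ 2) n = s * (1 + t ^ (n + 1)) / (1 - t ^ (n + 1)) := by
    rw [eq_div_iff htN1]
    have : (1 - s) ^ (n + 1) = t ^ (n + 1) * (1 + s) ^ (n + 1) := by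
      rw [← mul_pow, htd]; congr 1; field_simp
    rw [this] at hV
    have h2 : (1 + s) ^ (n + 1) ≠ 0 := pow_ne_zero _ h1s
    apply mul_right_cancel₀ h2
    linear_combination hV
  have hterm : ∀ k ∈ Finset.range (n + 1),
      (1 - s ^ 2) * Real.sin (k * Real.pi / (n + 1)) ^ 2 /
        (1 - (1 - s ^ 2) * Real.cos (k * Real.pi / (n + 1)) ^ 2)
      = 1 - s * ((1 - t ^ 2) /
        (1 - 2 * t * Real.cos (2 * (k * Real.pi / ((n + 1 : ℕ) : ℝ))) + t ^ 2)) := by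
    intro k _
    push_cast
    set θ := k * Real.pi / ((n : ℝ) + 1)
    have hD := D_pos t (Real.cos (2 * θ)) ht (Real.abs_cos_le_one _)
    rw [Real.sin_sq, Real.cos_two_mul] at *
    set c := Real.cos θ ^ 2
    have hx : 1 - s ^ 2 = 4 * t / (1 + t) ^ 2 := by
      rw [hst]; field_simp; ring
    have hE : 1 - (1 - s ^ 2) * c = (1 - 2 * t * (2 * c - 1) + t ^ 2) / (1 + t) ^ 2 := by
      rw [hx]; field_simp; ring
    rw [hE, hx, hst]
    obtain ⟨D, hDe⟩ : ∃ D, D = 1 - 2 * t * (2 * c - 1) + t ^ 2 := ⟨_, rfl⟩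
    rw [← hDe] at hD ⊢
    have hD0 := hD.ne'
    have e1 : 4 * t / (1 + t) ^ 2 * (1 - c) / (D / (1 + t) ^ 2) = 4 * t * (1 - c) / D := by
      field_simp
    have e2 : (1 - t) / (1 + t) * ((1 - t ^ 2) / D) = (1 - t) ^ 2 / D := by
      field_simp; ring
    rw [e1, e2, one_sub_div hD0]
    congr 1
    rw [hDe]
    ring
  have hsum : ∑ k ∈ Finset.Icc 1 n, (1 - s ^ 2) * Real.sin (k * Real.pi / (n + 1)) ^ 2 /
        (1 - (1 - s ^ 2) * Real.cos (k * Real.pi / (n + 1)) ^ 2)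
      = ∑ k ∈ Finset.range (n + 1), (1 - s ^ 2) * Real.sin (k * Real.pi / (n + 1)) ^ 2 /
        (1 - (1 - s ^ 2) * Real.cos (k * Real.pi / (n + 1)) ^ 2) := by
    apply Finset.sum_subset
    · intro k hk
      simp at hk ⊢; omega
    · intro k hk hk'
      have : k = 0 := by simp at hk hk'; omega
      simp [this]
  rw [← Finset.mul_sum, hsum, Finset.sum_congr rfl hterm, Finset.sum_sub_distrib,
    ← Finset.mul_sum, hP, hV2]
  have : (n : ℝ) + 1 ≠ 0 := by positivity
  simp
  field_simp
  ring

theorem coeff_unique (A B : ℕ → ℝ) (f : ℝ → ℝ)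
    (hA : ∀ x : ℝ, |x| < 1 → HasSum (fun m => A m * x ^ m) (f x))
    (hB : ∀ x : ℝ, |x| < 1 → HasSum (fun m => B m * x ^ m) (f x)) : A = B := by
  have aux : ∀ C : ℕ → ℝ, (∀ x : ℝ, |x| < 1 → HasSum (fun m => C m * x ^ m) (f x)) →
      HasFPowerSeriesAt f (FormalMultilinearSeries.ofScalars ℝ C) 0 := by
    intro C hC
    rw [hasFPowerSeriesAt_iff]
    filter_upwards [Metric.ball_mem_nhds (0 : ℝ) one_pos] with x hx
    have := hC x (by simpa using hx)
    simpa [FormalMultilinearSeries.coeff_ofScalars, mul_comm] using this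
  have h := (aux A hA).eq_formalMultilinearSeries (aux B hB)
  funext m
  have h2 := congrArg (fun p => FormalMultilinearSeries.coeff p m) h
  simpa [FormalMultilinearSeries.coeff_ofScalars] using h2

theorem stmt16 (n : ℕ) (hn : 2 ≤ n) (A : ℕ → ℝ)
    (hA : ∀ x : ℝ, |x| < ((Real.cos (Real.pi / (n + 1)))⁻¹) ^ 2 →
      HasSum (fun m => A m * x ^ m) (V x n)) :
    (∀ m : ℕ, 1 ≤ m →
      A (m + 1) = -(1 / (n + 1)) *
        ∑ k ∈ Finset.Icc 1 n,
          Real.cos (k * Real.pi / (n + 1)) ^ (2 * m) *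
            Real.sin (k * Real.pi / (n + 1)) ^ 2) ∧
    (∀ m : ℕ, 2 ≤ m →
      (∑ k ∈ Finset.Icc 1 n,
        Real.cos (k * Real.pi / (n + 1)) ^ (2 * (m - 1)) *
          Real.sin (k * Real.pi / (n + 1)) ^ 2) ≠ 0 → A m < 0) ∧
    (∀ m : ℕ, n < m → A m < 0) := by
  have hn' : (2 : ℝ) ≤ n := by exact_mod_cast hn
  have hpi := Real.pi_pos
  have hlt : Real.pi / ((n : ℝ) + 1) < Real.pi / 2 :=
    div_lt_div_of_pos_left hpi (by norm_num) (by linarith)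
  have h0 : 0 < Real.pi / ((n : ℝ) + 1) := by positivity
  have hcos : 0 < Real.cos (Real.pi / ((n : ℝ) + 1)) :=
    Real.cos_pos_of_mem_Ioo ⟨by linarith, hlt⟩
  have hsin : 0 < Real.sin (Real.pi / ((n : ℝ) + 1)) :=
    Real.sin_pos_of_pos_of_lt_pi h0 (by linarith)
  have hrad : (1 : ℝ) ≤ ((Real.cos (Real.pi / (n + 1)))⁻¹) ^ 2 :=
    one_le_pow₀ ((one_le_inv₀ hcos).2 (Real.cos_le_one _))
  let S : ℕ → ℝ := fun m => ∑ k ∈ Finset.Icc 1 n,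
          Real.cos (k * Real.pi / (n + 1)) ^ (2 * m) *
            Real.sin (k * Real.pi / (n + 1)) ^ 2
  let B : ℕ → ℝ := fun m => match m with
    | 0 => 1
    | m + 1 => -(1 / ((n : ℝ) + 1)) * S m
  have hB : ∀ x : ℝ, |x| < 1 → HasSum (fun m => B m * x ^ m) (V x n) := by
    intro x hx
    rw [V_partial n x (abs_lt.1 hx).2, add_comm, ← hasSum_nat_add_iff' 1]
    have hh : HasSum (fun m : ℕ => ∑ k ∈ Finset.Icc 1 n, -(1 / ((n : ℝ) + 1)) *
        (x * Real.sin (k * Real.pi / (n + 1)) ^ 2 *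
          (x * Real.cos (k * Real.pi / (n + 1)) ^ 2) ^ m))
        (∑ k ∈ Finset.Icc 1 n, -(1 / ((n : ℝ) + 1)) *
      (x * Real.sin (k * Real.pi / (n + 1)) ^ 2 /
        (1 - x * Real.cos (k * Real.pi / (n + 1)) ^ 2))) := by
      apply hasSum_sum
      intro k _
      apply HasSum.mul_left
      rw [div_eq_mul_inv]
      apply HasSum.mul_left
      apply hasSum_geometric_of_abs_lt_one
      rw [abs_mul, abs_of_nonneg (sq_nonneg (Real.cos _))]
      exact lt_of_le_of_lt (mul_le_of_le_one_right (abs_nonneg _) (Real.cos_sq_le_one _)) hx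
    convert hh using 1
    · rfl
    · funext m
      simp only [B, S]
      rw [mul_assoc, Finset.sum_mul, Finset.mul_sum]
      refine Finset.sum_congr rfl fun k _ => ?_
      rw [mul_pow, ← pow_mul]
      ring
    · simp [B]
  have hAB : A = B := coeff_unique A B (fun x => V x n)
    (fun x hx => hA x (lt_of_lt_of_le hx hrad)) hB
  have hS0 : ∀ m, ∀ k ∈ Finset.Icc 1 n, 0 ≤ Real.cos (k * Real.pi / (n + 1)) ^ (2 * m) *
            Real.sin (k * Real.pi / (n + 1)) ^ 2 := by
    intro m k _
    rw [pow_mul]; positivity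
  have hneg : ∀ m, 0 < S m → A (m + 1) < 0 := by
    intro m hm
    have h1 : A (m + 1) = -(1 / ((n : ℝ) + 1)) * S m := congrFun hAB (m + 1)
    have h2 : 0 < (1 / ((n : ℝ) + 1)) * S m := mul_pos (by positivity) hm
    rw [h1, neg_mul]
    exact neg_neg_of_pos h2
  refine ⟨fun m _ => congrFun hAB (m + 1), ?_, ?_⟩
  · intro m hm hne
    obtain ⟨m, rfl⟩ : ∃ j, m = j + 1 := ⟨m - 1, by omega⟩
    exact hneg m (lt_of_le_of_ne (Finset.sum_nonneg (hS0 m)) (Ne.symm hne))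
  · intro m hm
    obtain ⟨m, rfl⟩ : ∃ j, m = j + 1 := ⟨m - 1, by omega⟩
    apply hneg
    refine Finset.sum_pos' (hS0 m) ⟨1, by simp; omega, ?_⟩
    simp only [Nat.cast_one, one_mul]
    positivity
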